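/- arXiv:1501.00903 — 2 statements merged into one kernel-verified Lean document; each statement's English description precedes it below -/
import Mathlib

section
/- For every n ≥ 0, the variance V_n of the number of non-zero-blocks of a uniformly random (c,m)-colored B_n-partition satisfies V_n = T_{n+2}/(m²·T_n) − T_{n+1}²/(m²·T_n²) − 1/m, where V_n = (Σ_{k=0}^{n} k²·T_{n,k})/T_n − ((Σ_{k=0}^{n} k·T_{n,k})/T_n)². -/
def Tnk (m c : ℕ) : ℕ → ℕ → ℕ
  | 0, 0 => 1
  | 0, _ + 1 => 0
  | n + 1, 0 => c * Tnk m c n 0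
  | n + 1, k + 1 => Tnk m c n k + (m * (k + 1) + c) * Tnk m c n (k + 1)

def Ttot (m c n : ℕ) : ℕ := ∑ k ∈ Finset.range (n + 1), Tnk m c n k

/-- The variance `V_n = (∑_k k²·T_{n,k})/T_n − ((∑_k k·T_{n,k})/T_n)²` of the
number of non-zero-blocks. -/
noncomputable def Vn (m c n : ℕ) : ℝ :=
  (∑ k ∈ Finset.range (n + 1), (k : ℝ) ^ 2 * Tnk m c n k) / Ttot m c n -
    ((∑ k ∈ Finset.range (n + 1), (k : ℝ) * Tnk m c n k) / Ttot m c n) ^ 2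

theorem Tnk_zero_of_lt (m c : ℕ) : ∀ n k : ℕ, n < k → Tnk m c n k = 0
  | 0, 0, h => by omega
  | 0, _ + 1, _ => by simp [Tnk]
  | n + 1, 0, h => by omega
  | n + 1, k + 1, h => by
    simp [Tnk, Tnk_zero_of_lt m c n k (by omega), Tnk_zero_of_lt m c n (k + 1) (by omega)]

theorem Tnk_pos (m c : ℕ) (hc : 0 < c) (n : ℕ) : 0 < Tnk m c n 0 := by
  induction n with
  | zero => simp [Tnk]
  | succ n ih => simp only [Tnk]; positivity

theorem sum_step (m c n : ℕ) (f : ℕ → ℝ) :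
    ∑ k ∈ Finset.range (n + 2), f k * Tnk m c (n + 1) k =
      ∑ k ∈ Finset.range (n + 1), (f (k + 1) + (m * k + c) * f k) * Tnk m c n k := by
  have h1 : ∑ k ∈ Finset.range (n + 2), ((m * k + c) * f k) * (Tnk m c n k : ℝ) =
      ∑ k ∈ Finset.range (n + 1), ((m * k + c) * f k) * (Tnk m c n k : ℝ) := by
    rw [Finset.sum_range_succ, Tnk_zero_of_lt m c n (n + 1) (by omega)]
    simp
  simp only [add_mul _ _ (Nat.cast (Tnk m c n _) : ℝ)]
  rw [Finset.sum_add_distrib, ← h1, Finset.sum_range_succ', Finset.sum_range_succ' _ (n + 1),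
    ← add_assoc, ← Finset.sum_add_distrib]
  congr 1
  · apply Finset.sum_congr rfl
    intro k _
    simp only [Tnk]
    push_cast
    ring
  · simp only [Tnk]
    push_cast
    ring

/-- `V_n = T_{n+2}/(m²·T_n) − T_{n+1}²/(m²·T_n²) − 1/m`. -/
theorem stmt_5 (m c : ℕ) (hm : 0 < m) (hc : 0 < c) (n : ℕ) :
    Vn m c n =
      (Ttot m c (n + 2) : ℝ) / ((m : ℝ) ^ 2 * Ttot m c n) -
        (Ttot m c (n + 1) : ℝ) ^ 2 / ((m : ℝ) ^ 2 * (Ttot m c n : ℝ) ^ 2) -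
        1 / m := by
  have hT : (0 : ℝ) < Ttot m c n := by
    have : 0 < Ttot m c n := lt_of_lt_of_le (Tnk_pos m c hc n)
      (Finset.single_le_sum (f := fun k => Tnk m c n k) (fun _ _ => Nat.zero_le _) (by simp))
    exact_mod_cast this
  have hm' : (0 : ℝ) < m := by exact_mod_cast hm
  have h0 : (Ttot m c n : ℝ) = ∑ k ∈ Finset.range (n + 1), (Tnk m c n k : ℝ) := by
    simp [Ttot]
  have h1 : (Ttot m c (n + 1) : ℝ) =
      m * (∑ k ∈ Finset.range (n + 1), (k : ℝ) * Tnk m c n k) + (c + 1) * Ttot m c n := by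
    have := sum_step m c n (fun _ => 1)
    simp only [one_mul] at this
    rw [h0, Ttot, Nat.cast_sum, this, Finset.mul_sum, Finset.mul_sum, ← Finset.sum_add_distrib]
    exact Finset.sum_congr rfl fun k _ => by ring
  have h2 : (Ttot m c (n + 2) : ℝ) =
      m ^ 2 * (∑ k ∈ Finset.range (n + 1), (k : ℝ) ^ 2 * Tnk m c n k) +
      2 * m * (c + 1) * (∑ k ∈ Finset.range (n + 1), (k : ℝ) * Tnk m c n k) +
      ((c + 1) ^ 2 + m) * Ttot m c n := by
    have e1 := sum_step m c (n + 1) (fun _ => 1)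
    simp only [one_mul] at e1
    have e2 := sum_step m c n (fun k => 1 + (m * k + c) * 1)
    rw [h0, Ttot, Nat.cast_sum, e1, e2, Finset.mul_sum, Finset.mul_sum, Finset.mul_sum,
      ← Finset.sum_add_distrib, ← Finset.sum_add_distrib]
    exact Finset.sum_congr rfl fun k _ => by push_cast; ring
  rw [Vn, h1, h2]
  field_simp
  ring
end

section
/- The expectation E_n of the number of non-zero-blocks of a uniformly random (c,m)-colored B_n-partition satisfies E_n ~ n/log n as n → ∞; that is, E_n·(log n)/n → 1. -/
open Filter

/-- The expectation `E_n = (∑_k k·T_{n,k})/T_n`. -/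
noncomputable def En (m c n : ℕ) : ℝ :=
  (∑ k ∈ Finset.range (n + 1), (k : ℝ) * Tnk m c n k) / Ttot m c n

lemma Tnk_zero (m c : ℕ) : ∀ n k, n < k → Tnk m c n k = 0 := by
  intro n
  induction n with
  | zero => intro k hk; cases k with
    | zero => omega
    | succ k => rfl
  | succ n ih => intro k hk; cases k with
    | zero => omega
    | succ k => simp [Tnk, ih k (by omega), ih (k+1) (by omega)]

lemma Tnk_sum (m c n : ℕ) (f : ℕ → ℝ) :
    ∑ j ∈ Finset.range (n + 2), (Tnk m c (n+1) j : ℝ) * f j =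
    ∑ j ∈ Finset.range (n + 1), (Tnk m c n j : ℝ) * (f (j+1) + (m * j + c) * f j) := by
  have h1 : ∑ j ∈ Finset.range (n + 1), (Tnk m c n j : ℝ) * ((m * j + c) * f j) =
      ∑ j ∈ Finset.range (n + 2), (Tnk m c n j : ℝ) * ((m * j + c) * f j) := by
    rw [Finset.sum_range_succ _ (n+1), Tnk_zero m c n (n+1) (by omega)]; simp
  simp_rw [mul_add]
  rw [Finset.sum_add_distrib]
  rw [h1, Finset.sum_range_succ', Finset.sum_range_succ' _ (n+1), ← add_assoc,
    ← Finset.sum_add_distrib]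
  congr 1
  · apply Finset.sum_congr rfl
    intro j _
    simp only [Tnk]; push_cast; ring
  · simp only [Tnk]; push_cast; ring

lemma Ttot_cast (m c n : ℕ) : (Ttot m c n : ℝ) = ∑ j ∈ Finset.range (n + 1), (Tnk m c n j : ℝ) := by
  simp [Ttot]

lemma Ttot_succ (m c n : ℕ) : (Ttot m c (n+1) : ℝ) =
    m * (∑ k ∈ Finset.range (n + 1), (k : ℝ) * Tnk m c n k) + (1 + c) * Ttot m c n := by
  have := Tnk_sum m c n (fun _ => 1)
  simp only [mul_one] at this
  rw [Ttot_cast, Ttot_cast, this, Finset.mul_sum, Finset.mul_sum, ← Finset.sum_add_distrib]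
  apply Finset.sum_congr rfl
  intro j _; ring

lemma pow_expand (m c n k : ℕ) : ((m * k + c : ℝ)) ^ n =
    ∑ j ∈ Finset.range (n + 1), (Tnk m c n j : ℝ) * (m ^ j * (k.descFactorial j : ℝ)) := by
  induction n with
  | zero => simp [Tnk]
  | succ n ih =>
    rw [Tnk_sum m c n (fun j => (m:ℝ) ^ j * (k.descFactorial j : ℝ)), pow_succ, ih, Finset.sum_mul]
    apply Finset.sum_congr rfl
    intro j _
    have : (k.descFactorial (j+1) : ℝ) = (k - j) * k.descFactorial j := by
      rw [Nat.descFactorial_succ]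
      rcases le_or_gt j k with h | h
      · push_cast [Nat.cast_sub h]; ring
      · rw [Nat.descFactorial_of_lt h]; simp
    simp only [this]; ring

noncomputable def tt (m c n k : ℕ) : ℝ := (m * k + c : ℝ) ^ n / (m ^ k * k.factorial)

lemma hasSum_desc (m j : ℕ) (hm : 0 < m) :
    HasSum (fun k : ℕ => (m ^ j * (k.descFactorial j : ℝ)) / ((m:ℝ) ^ k * k.factorial))
      (Real.exp (1 / m)) := by
  have hm' : (m:ℝ) ≠ 0 := by positivity
  rw [← hasSum_nat_add_iff' j]
  have h0 : ∑ i ∈ Finset.range j, (m ^ j * (i.descFactorial j : ℝ)) / ((m:ℝ) ^ i * i.factorial) = 0 := by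
    apply Finset.sum_eq_zero
    intro i hi
    rw [Nat.descFactorial_of_lt (Finset.mem_range.1 hi)]; simp
  rw [h0, sub_zero]
  have := NormedSpace.expSeries_div_hasSum_exp (𝔸 := ℝ) (1 / (m:ℝ))
  rw [← Real.exp_eq_exp_ℝ] at this
  refine Eq.mpr (congrArg (fun g => HasSum g _) (funext fun k => ?_)) this
  have h1 : ((k + j).factorial : ℝ) = k.factorial * (k+j).descFactorial j := by
    have := Nat.factorial_mul_descFactorial (n := k + j) (k := j) (by omega)
    rw [Nat.add_sub_cancel] at this
    exact_mod_cast this.symm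
  have h2 : ((k+j).descFactorial j : ℝ) ≠ 0 := by
    have : 0 < (k+j).descFactorial j := Nat.descFactorial_pos.2 (by omega)
    positivity
  have h3 : (k.factorial : ℝ) ≠ 0 := by positivity
  rw [h1, pow_add, one_div, inv_pow]
  field_simp

lemma hasSum_tt (m c n : ℕ) (hm : 0 < m) :
    HasSum (tt m c n) (Ttot m c n * Real.exp (1 / m)) := by
  have := hasSum_sum (s := Finset.range (n+1)) (fun j _ => (hasSum_desc m j hm).mul_left (Tnk m c n j : ℝ))
  rw [← Finset.sum_mul, ← Ttot_cast] at this
  refine Eq.mpr (congrArg (fun g => HasSum g _) (funext fun k => ?_)) this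
  rw [tt, pow_expand, Finset.sum_div]
  apply Finset.sum_congr rfl
  intro j _; ring

lemma tt_pos (m c n k : ℕ) (hm : 0 < m) (hc : 0 < c) : 0 < tt m c n k := by
  unfold tt; positivity

lemma tt_succ (m c n k : ℕ) : tt m c (n+1) k = (m * k + c) * tt m c n k := by
  unfold tt; ring

lemma hs_geo : HasSum (fun j : ℕ => (j:ℝ) * (1/2)^j) 2 := by
  have := hasSum_coe_mul_geometric_of_norm_lt_one (r := (1/2:ℝ)) (by norm_num)
  norm_num at this ⊢
  exact this

lemma Ttot_pos (m c n : ℕ) (hm : 0 < m) (hc : 0 < c) : 0 < (Ttot m c n : ℝ) := by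
  have h := hasSum_tt m c n hm
  have h1 : tt m c n 0 ≤ Ttot m c n * Real.exp (1/m) :=
    le_hasSum h 0 (fun j _ => (tt_pos m c n j hm hc).le)
  have := tt_pos m c n 0 hm hc
  exact pos_of_mul_pos_left (this.trans_le h1) (Real.exp_pos _).le

lemma upper_gen (m c n K : ℕ) (hm : 0 < m) (hc : 0 < c)
    (h : ∀ k, K ≤ k → 2 * tt m c n (k+1) ≤ tt m c n k) :
    (Ttot m c (n+1) : ℝ) ≤ (m * K + c + 2 * m) * Ttot m c n := by
  have hS := hasSum_tt m c n hm
  have hS1 := hasSum_tt m c (n+1) hm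
  have hd := hS1.sub (hS.mul_left (m * K + c : ℝ))
  have hK : tt m c n K ≤ Ttot m c n * Real.exp (1/m) :=
    le_hasSum hS K (fun j _ => (tt_pos m c n j hm hc).le)
  have hg : ∀ j, tt m c n (j + K) ≤ tt m c n K * (1/2)^j := by
    intro j
    induction j with
    | zero => simp
    | succ j ih =>
      have := h (j + K) (by omega)
      rw [show j + 1 + K = j + K + 1 by ring, pow_succ]
      linarith
  have hd' := (hasSum_nat_add_iff' K).2 hd
  have hneg : ∑ i ∈ Finset.range K, (tt m c (n+1) i - (m * K + c) * tt m c n i) ≤ 0 := by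
    apply Finset.sum_nonpos
    intro i hi
    have h1 : (i:ℝ) ≤ K := by exact_mod_cast (Finset.mem_range.1 hi).le
    rw [tt_succ, ← sub_mul]
    apply mul_nonpos_of_nonpos_of_nonneg _ (tt_pos m c n i hm hc).le
    have : (m:ℝ) * i ≤ m * K := by gcongr
    linarith
  have hle := hasSum_le (fun j => ?_) hd' (hs_geo.mul_left (m * tt m c n K))
  · have he := Real.exp_pos (1 / (m:ℝ))
    have hm' : (0:ℝ) < m := by exact_mod_cast hm
    have : (Ttot m c (n+1) : ℝ) * Real.exp (1/m) ≤
        ((m * K + c + 2 * m) * Ttot m c n) * Real.exp (1/m) := by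
      nlinarith
    exact le_of_mul_le_mul_right this he
  · rw [tt_succ, ← sub_mul]
    push_cast
    calc (m * (j + K) + c - (m * K + c) : ℝ) * tt m c n (j + K) = (m * j) * tt m c n (j + K) := by ring
      _ ≤ (m * j) * (tt m c n K * (1/2)^j) := by gcongr; exact hg j
      _ = _ := by ring

lemma lower_gen (m c n L : ℕ) (hm : 0 < m) (hc : 0 < c)
    (h : ∀ k, k < L → 2 * tt m c n k ≤ tt m c n (k+1)) :
    (m * L + c - 2 * m) * Ttot m c n ≤ (Ttot m c (n+1) : ℝ) := by
  have hS := hasSum_tt m c n hm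
  have hS1 := hasSum_tt m c (n+1) hm
  have hd := (hS.mul_left (m * L + c : ℝ)).sub hS1
  have hL : tt m c n L ≤ Ttot m c n * Real.exp (1/m) :=
    le_hasSum hS L (fun j _ => (tt_pos m c n j hm hc).le)
  have hg : ∀ j, j ≤ L → tt m c n (L - j) ≤ tt m c n L * (1/2)^j := by
    intro j
    induction j with
    | zero => simp
    | succ j ih =>
      intro hj
      have := h (L - (j+1)) (by omega)
      rw [show L - (j + 1) + 1 = L - j by omega] at this
      have := ih (by omega)
      rw [pow_succ]
      linarith
  have hd' := (hasSum_nat_add_iff' L).2 hd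
  have hneg := hd'.nonpos (fun i => ?_)
  · have hfin : ∑ i ∈ Finset.range L, ((m * L + c) * tt m c n i - tt m c (n+1) i) ≤
        m * tt m c n L * 2 := by
      rw [← Finset.sum_range_reflect]
      have h1 : ∑ j ∈ Finset.range (L+1), (m * tt m c n L) * ((j:ℝ) * (1/2)^j) ≤ m * tt m c n L * 2 :=
        sum_le_hasSum _ (fun j _ => by have := tt_pos m c n L hm hc; positivity)
          (hs_geo.mul_left (m * tt m c n L))
      refine le_trans ?_ h1
      rw [Finset.sum_range_succ']
      simp only [Nat.cast_zero, zero_mul, mul_zero, add_zero]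
      apply Finset.sum_le_sum
      intro j hj
      have hj := Finset.mem_range.1 hj
      rw [tt_succ, ← sub_mul, show L - 1 - j = L - (j+1) by omega]
      calc (m * L + c - (m * ((L - (j+1) : ℕ) : ℝ) + c) : ℝ) * tt m c n (L - (j+1))
          = (m * ((j + 1 : ℕ):ℝ)) * tt m c n (L - (j+1)) := by
            rw [Nat.cast_sub (by omega)]; ring
        _ ≤ (m * ((j + 1 : ℕ):ℝ)) * (tt m c n L * (1/2)^(j+1)) := by
            gcongr; exact hg (j+1) (by omega)
        _ = _ := by ring
    have he := Real.exp_pos (1 / (m:ℝ))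
    have hm' : (0:ℝ) < m := by exact_mod_cast hm
    have : ((m * L + c - 2 * m) * Ttot m c n) * Real.exp (1/m) ≤
        (Ttot m c (n+1) : ℝ) * Real.exp (1/m)  := by
      nlinarith
    exact le_of_mul_le_mul_right this he
  · rw [tt_succ, ← sub_mul]
    apply mul_nonpos_of_nonpos_of_nonneg _ (tt_pos m c n _ hm hc).le
    push_cast
    have : (0:ℝ) ≤ m * i := by positivity
    linarith

lemma tt_ratio (m c n k : ℕ) (hm : 0 < m) (hc : 0 < c) :
    tt m c n (k+1) * (m * (k+1)) = tt m c n k * (1 + m / (m * k + c)) ^ n := by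
  have h0 : (m * k + c : ℝ) ≠ 0 := by positivity
  have h1 : (1 + m / (m * k + c) : ℝ) = (m * (k+1) + c) / (m * k + c) := by
    field_simp; ring
  have hm' : (m:ℝ) ≠ 0 := by positivity
  have h3 : (k.factorial : ℝ) ≠ 0 := by positivity
  have h4 : (k+1:ℝ) ≠ 0 := by positivity
  rw [h1, tt, tt, Nat.factorial_succ, div_pow]
  push_cast
  rw [pow_succ]
  field_simp

lemma upper_cond (m c n k : ℕ) (hm : 0 < m) (hc : 0 < c) (D : ℝ) (hD : 0 < D)
    (hn : 0 < n) (hk : n / D ≤ k) (hDD : D + Real.log D + Real.log 2 ≤ Real.log n) :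
    2 * tt m c n (k+1) ≤ tt m c n k := by
  have hr := tt_ratio m c n k hm hc
  have hn' : (0:ℝ) < n := by exact_mod_cast hn
  have hm' : (1:ℝ) ≤ m := by exact_mod_cast hm
  have hc' : (1:ℝ) ≤ c := by exact_mod_cast hc
  have hkpos : (0:ℝ) < k := lt_of_lt_of_le (by positivity) hk
  have hq : 2 * (1 + m / (m * k + c) : ℝ) ^ n ≤ m * (k+1) := by
    have h1 : (1 + m / (m * k + c) : ℝ) ≤ Real.exp (1 / k) := by
      have : (m / (m * k + c) : ℝ) ≤ 1 / k := by
        rw [div_le_div_iff₀ (by positivity) hkpos]; linarith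
      have := Real.add_one_le_exp (1 / (k:ℝ))
      linarith
    have h2 : (1 + m / (m * k + c) : ℝ) ^ n ≤ Real.exp D := by
      calc _ ≤ (Real.exp (1 / k)) ^ n := by gcongr
        _ = Real.exp (n / k) := by rw [← Real.exp_nat_mul]; congr 1; ring
        _ ≤ Real.exp D := by
          apply Real.exp_le_exp.2
          rw [div_le_iff₀ hD] at hk
          rw [div_le_iff₀ hkpos]; linarith
    have h3 : 2 * Real.exp D ≤ n / D := by
      rw [← Real.log_le_log_iff (by positivity) (by positivity),
        Real.log_mul (by norm_num) (by positivity), Real.log_exp,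
        Real.log_div (by positivity) (by positivity)]
      linarith
    nlinarith
  have hp := tt_pos m c n k hm hc
  have : (2 * tt m c n (k+1)) * (m * (k+1)) ≤ tt m c n k * (m * (k+1)) := by
    rw [mul_assoc, hr]
    nlinarith
  exact le_of_mul_le_mul_right this (by positivity)

lemma lower_cond (m c n k : ℕ) (hm : 0 < m) (hc : 0 < c) (y : ℝ) (hy : 0 < y)
    (hn : 0 < n) (hk : (k + 1 + c : ℝ) ≤ n / y) (hyy : y ≤ Real.log n) (hym : 2 * m ≤ y)
    (hyn : Real.log n ≤ y) :
    2 * tt m c n k ≤ tt m c n (k+1) := by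
  have hr := tt_ratio m c n k hm hc
  have hn' : (0:ℝ) < n := by exact_mod_cast hn
  have hm' : (1:ℝ) ≤ m := by exact_mod_cast hm
  have hc' : (1:ℝ) ≤ c := by exact_mod_cast hc
  have hq : 2 * (m * (k+1)) ≤ (1 + m / (m * k + c) : ℝ) ^ n := by
    have h1 : Real.exp (1 / (k + 1 + c)) ≤ (1 + m / (m * k + c) : ℝ) := by
      have h2 := Real.one_sub_inv_le_log_of_pos (x := (1 + m / (m * k + c) : ℝ)) (by positivity)
      rw [← Real.le_log_iff_exp_le (by positivity)]
      refine le_trans ?_ h2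
      have : (1 - (1 + m / (m * k + c) : ℝ)⁻¹) = m / (m * (k + 1) + c) := by
        field_simp; ring
      rw [this, div_le_div_iff₀ (by positivity) (by positivity)]
      nlinarith
    have h2 : Real.exp y ≤ (1 + m / (m * k + c) : ℝ) ^ n := by
      calc Real.exp y ≤ Real.exp (n / (k + 1 + c)) := by
            apply Real.exp_le_exp.2
            rw [le_div_iff₀ hy] at hk
            rw [le_div_iff₀ (by positivity)]; linarith
        _ = (Real.exp (1 / (k + 1 + c))) ^ n := by rw [← Real.exp_nat_mul]; congr 1; ring
        _ ≤ _ := by gcongr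
    have h3 : (n:ℝ) ≤ Real.exp y := by
      rwa [← Real.log_le_iff_le_exp hn']
    rw [le_div_iff₀ hy] at hk
    nlinarith
  have hp := tt_pos m c n k hm hc
  have : (2 * tt m c n k) * (m * (k+1)) ≤ tt m c n (k+1) * (m * (k+1)) := by
    rw [hr]
    nlinarith
  exact le_of_mul_le_mul_right this (by positivity)

lemma En_eq (m c n : ℕ) (hm : 0 < m) (hc : 0 < c) :
    (Ttot m c (n+1) : ℝ) = (m * En m c n + 1 + c) * Ttot m c n := by
  have h := Ttot_pos m c n hm hc
  rw [Ttot_succ, En]; field_simp; ring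

lemma En_upper (m c n : ℕ) (hm : 0 < m) (hc : 0 < c) (hn : 0 < n) (D : ℝ) (hD : 0 < D)
    (hDD : D + Real.log D + Real.log 2 ≤ Real.log n) : En m c n ≤ n / D + 3 := by
  have h := upper_gen m c n ⌈n / D⌉₊ hm hc (fun k hk =>
    upper_cond m c n k hm hc D hD hn (Nat.ceil_le.1 hk) hDD)
  rw [En_eq m c n hm hc] at h
  have h := le_of_mul_le_mul_right h (Ttot_pos m c n hm hc)
  have h2 := Nat.ceil_lt_add_one (a := n / D) (by positivity)
  have hm' : (0:ℝ) < m := by exact_mod_cast hm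
  have : m * En m c n ≤ m * (n / D + 3) := by nlinarith
  exact le_of_mul_le_mul_left this hm'

lemma En_lower (m c n : ℕ) (hm : 0 < m) (hc : 0 < c) (hn : 0 < n)
    (hy : 2 * m ≤ Real.log n) : n / Real.log n - c - 4 ≤ En m c n := by
  have hm' : (1:ℝ) ≤ m := by exact_mod_cast hm
  have hyp : 0 < Real.log n := by linarith
  have h := lower_gen m c n (⌊n / Real.log n⌋₊ - c) hm hc (fun k hk => by
    refine lower_cond m c n k hm hc (Real.log n) hyp hn ?_ le_rfl hy le_rfl
    have h1 : k + 1 + c ≤ ⌊n / Real.log n⌋₊ := by omega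
    have := (Nat.le_floor_iff (by positivity)).1 h1
    exact_mod_cast this)
  rw [En_eq m c n hm hc] at h
  have h := le_of_mul_le_mul_right h (Ttot_pos m c n hm hc)
  have h2 := Nat.lt_floor_add_one (n / Real.log n)
  have h3 : (⌊n / Real.log n⌋₊ : ℝ) ≤ ((⌊n / Real.log n⌋₊ - c : ℕ) : ℝ) + c := by
    exact_mod_cast (by omega)
  have : m * (n / Real.log n - c - 4) ≤ m * En m c n := by nlinarith
  exact le_of_mul_le_mul_left this (by linarith)

/-- `E_n ~ n/log n` as `n → ∞`, i.e. `E_n·(log n)/n → 1`. -/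
theorem stmt_16 (m c : ℕ) (hm : 0 < m) (hc : 0 < c) :
    Tendsto (fun n : ℕ => En m c n * Real.log n / n) atTop (nhds 1) := by
  have hlog : Tendsto (fun n : ℕ => Real.log n) atTop atTop :=
    Real.tendsto_log_atTop.comp tendsto_natCast_atTop_atTop
  have hln : Tendsto (fun n : ℕ => Real.log n / n) atTop (nhds 0) := by
    have := (Real.isLittleO_log_id_atTop.tendsto_div_nhds_zero).comp (tendsto_natCast_atTop_atTop (R := ℝ))
    exact this
  have hll : Tendsto (fun n : ℕ => Real.log (2 * Real.log n) / Real.log n) atTop (nhds 0) := by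
    have h1 : Tendsto (fun n : ℕ => 2 * Real.log n) atTop atTop := hlog.const_mul_atTop (by norm_num)
    have := ((Real.isLittleO_log_id_atTop.tendsto_div_nhds_zero).comp h1).const_mul 2
    rw [mul_zero] at this
    refine this.congr (fun n => ?_)
    simp only [Function.comp, id]
    field_simp
  have hup : Tendsto (fun n : ℕ => (1 - Real.log (2 * Real.log n) / Real.log n)⁻¹ + 3 * (Real.log n / n))
      atTop (nhds 1) := by
    have := ((tendsto_const_nhds (x := (1:ℝ))).sub hll).inv₀ (by norm_num)
    have := this.add (hln.const_mul 3)
    simpa using this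
  have hlo : Tendsto (fun n : ℕ => 1 - (c + 4) * (Real.log n / n)) atTop (nhds 1) := by
    have := (tendsto_const_nhds (x := (1:ℝ))).sub (hln.const_mul ((c:ℝ) + 4))
    simpa using this
  refine tendsto_of_tendsto_of_tendsto_of_le_of_le' hlo hup ?_ ?_
  · filter_upwards [hlog.eventually_ge_atTop (2 * m), hlog.eventually_gt_atTop 0,
      eventually_gt_atTop 0] with n h1 h2 h3
    have h := En_lower m c n hm hc h3 h1
    have h3' : (0:ℝ) < n := by exact_mod_cast h3
    calc 1 - (c + 4) * (Real.log n / n) = (n / Real.log n - c - 4) * Real.log n / n := by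
          field_simp; ring
      _ ≤ _ := by gcongr
  · filter_upwards [hlog.eventually_ge_atTop 1, hll.eventually (gt_mem_nhds zero_lt_one),
      eventually_gt_atTop 0] with n h1 h2 h3
    have h3' : (0:ℝ) < n := by exact_mod_cast h3
    have hy : 0 < Real.log n := by linarith
    rw [div_lt_one hy] at h2
    have hD : 0 < Real.log n - Real.log (2 * Real.log n) := by linarith
    have h := En_upper m c n hm hc h3 _ hD (by
      have e1 : Real.log (Real.log n - Real.log (2 * Real.log n)) ≤ Real.log (Real.log n) := by
        apply Real.log_le_log hD
        have := Real.log_nonneg (x := 2 * Real.log n) (by linarith)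
        linarith
      have e2 : Real.log (2 * Real.log n) = Real.log 2 + Real.log (Real.log n) :=
        Real.log_mul (by norm_num) hy.ne'
      linarith)
    have e : (1 - Real.log (2 * Real.log n) / Real.log n)⁻¹
        = Real.log n / (Real.log n - Real.log (2 * Real.log n)) := by
      rw [one_sub_div hy.ne', inv_div]
    rw [e]
    calc En m c n * Real.log n / n
        ≤ (n / (Real.log n - Real.log (2 * Real.log n)) + 3) * Real.log n / n := by gcongr
      _ = _ := by
        generalize Real.log n - Real.log (2 * Real.log n) = D at hD
        field_simp
end
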